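/- Let X and Y be varieties over a field k of dimension at most n such that [X] = [Y] in K_0(V_k^{(n,n-1)}). Then there exist open subvarieties U ⊆ X and V ⊆ Y such that U and V are piecewise isomorphic and both X∖U and Y∖V have dimension strictly less than n. -/

import Mathlib

open AlgebraicGeometry CategoryTheory CategoryTheory.Limits

noncomputable section

universe u

/-- A variety over a field `k`: a reduced separated scheme of finite type over `Spec k`. -/
structure Variety (k : Type u) [Field k] : Type (u + 1) where
  /-- the underlying scheme -/
  toScheme : Scheme.{u}
  /-- the structure morphism to `Spec k` -/
  str : toScheme ⟶ Spec (CommRingCat.of k)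
  reduced : IsReduced toScheme
  separated : IsSeparated str
  locallyOfFiniteType : LocallyOfFiniteType str
  quasiCompact : QuasiCompact str

namespace Variety

variable {k : Type u} [Field k]

/-- The dimension of a variety, i.e. the Krull dimension of its underlying space. -/
def dim (V : Variety k) : WithBot ℕ∞ := topologicalKrullDim V.toScheme

/-- `W` together with (implicitly) its two projections is a product of `X` and `Y`
over `k`, i.e. `W ≅ X ×ₖ Y`. -/
def IsProductOf (W X Y : Variety k) : Prop :=
  ∃ e : W.toScheme ≅ Limits.pullback X.str Y.str,
    e.hom ≫ Limits.pullback.fst X.str Y.str ≫ X.str = W.str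

/-- `A` is the affine line `𝔸¹` over `k`. -/
def IsAffLine (A : Variety k) : Prop :=
  ∃ e : A.toScheme ≅ Spec (CommRingCat.of (Polynomial k)),
    e.hom ≫ Spec.map (CommRingCat.ofHom (algebraMap k (Polynomial k))) = A.str

/-- `A` is affine `r`-space `𝔸^r` over `k`. -/
def IsAffSpace (r : ℕ) (A : Variety k) : Prop :=
  ∃ e : A.toScheme ≅ Spec (CommRingCat.of (MvPolynomial (Fin r) k)),
    e.hom ≫ Spec.map (CommRingCat.ofHom (algebraMap k (MvPolynomial (Fin r) k))) = A.str

/-- A variety is smooth if its structure morphism is smooth. -/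
def IsSmoothVar (V : Variety k) : Prop := IsSmooth V.str

/-- Projective `N`-space over `k`, as the `Proj` of a polynomial ring. -/
def ProjSpace (k : Type u) [Field k] (N : ℕ) : Scheme.{u} :=
  letI := MvPolynomial.gradedAlgebra (σ := Fin (N + 1)) (R := k)
  Proj (MvPolynomial.homogeneousSubmodule (Fin (N + 1)) k)

/-- The structure morphism of projective `N`-space over `k`. -/
def ProjSpace.str (k : Type u) [Field k] (N : ℕ) :
    ProjSpace k N ⟶ Spec (CommRingCat.of k) :=
  letI := MvPolynomial.gradedAlgebra (σ := Fin (N + 1)) (R := k)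
  Proj.toSpecZero (MvPolynomial.homogeneousSubmodule (Fin (N + 1)) k) ≫
    Spec.map (CommRingCat.ofHom
      (algebraMap k (MvPolynomial.homogeneousSubmodule (Fin (N + 1)) k 0)))

/-- `P` is projective `N`-space over `k`, as a variety. -/
def IsProjSpaceVar (N : ℕ) (P : Variety k) : Prop :=
  ∃ e : P.toScheme ≅ ProjSpace k N, e.hom ≫ ProjSpace.str k N = P.str

/-- A variety is projective if it admits a closed immersion into some `ℙ^N` over `k`. -/
def IsProjectiveVar (V : Variety k) : Prop :=
  ∃ (N : ℕ) (i : V.toScheme ⟶ ProjSpace k N),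
    IsClosedImmersion i ∧ i ≫ ProjSpace.str k N = V.str

/-- `X` and `Y` are birationally isomorphic over `k`:
some dense open subvarieties are isomorphic over `k`. -/
def BirEquiv (X Y : Variety k) : Prop :=
  ∃ (U : X.toScheme.Opens) (V : Y.toScheme.Opens),
    Dense (U : Set X.toScheme) ∧ Dense (V : Set Y.toScheme) ∧
    ∃ e : U.toScheme ≅ V.toScheme, e.hom ≫ V.ι ≫ Y.str = U.ι ≫ X.str

/-- `X` and `Y` are stably birational: `X × 𝔸^r` and `Y × 𝔸^r` are birationally
isomorphic for some `r ≥ 0`. -/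
def StablyBirational (X Y : Variety k) : Prop :=
  ∃ (r : ℕ) (A XA YA : Variety k),
    IsAffSpace r A ∧ IsProductOf XA X A ∧ IsProductOf YA Y A ∧ BirEquiv XA YA

/-- `X` and `Y` are piecewise isomorphic: they admit finite partitions into locally
closed subvarieties which are isomorphic over `k` piece by piece. -/
def PiecewiseIso (X Y : Variety k) : Prop :=
  ∃ (m : ℕ) (P Q : Fin m → Variety k)
    (f : ∀ i, (P i).toScheme ⟶ X.toScheme) (g : ∀ i, (Q i).toScheme ⟶ Y.toScheme),
    (∀ i, IsImmersion (f i)) ∧ (∀ i, IsImmersion (g i)) ∧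
    (∀ i, f i ≫ X.str = (P i).str) ∧ (∀ i, g i ≫ Y.str = (Q i).str) ∧
    (∀ i j, i ≠ j → Disjoint (Set.range (f i).base) (Set.range (f j).base)) ∧
    (∀ i j, i ≠ j → Disjoint (Set.range (g i).base) (Set.range (g j).base)) ∧
    (⋃ i, Set.range (f i).base) = Set.univ ∧
    (⋃ i, Set.range (g i).base) = Set.univ ∧
    ∀ i, ∃ e : (P i).toScheme ≅ (Q i).toScheme, e.hom ≫ (Q i).str = (P i).str

/-- The set of generators of the scissor-type relations among varieties of the class `P`:
`[X] = [X']` for `X ≅ X'` over `k`, and `[X] = [Y] + [U]` whenever `Y` is a closed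
subvariety of `X` and `U` is its open complement. -/
def cutRel (P : Variety k → Prop) : Set (FreeAbelianGroup {V : Variety k // P V}) :=
  {a | (∃ X Y : {V : Variety k // P V},
          (∃ e : X.1.toScheme ≅ Y.1.toScheme, e.hom ≫ Y.1.str = X.1.str) ∧
          a = FreeAbelianGroup.of X - FreeAbelianGroup.of Y) ∨
       (∃ (X Y U : {V : Variety k // P V}) (i : Y.1.toScheme ⟶ X.1.toScheme)
          (j : U.1.toScheme ⟶ X.1.toScheme),
          IsClosedImmersion i ∧ IsOpenImmersion j ∧
          i ≫ X.1.str = Y.1.str ∧ j ≫ X.1.str = U.1.str ∧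
          Set.range j.base = (Set.range i.base)ᶜ ∧
          a = FreeAbelianGroup.of X - FreeAbelianGroup.of Y - FreeAbelianGroup.of U)}

/-- The Grothendieck group of the class of varieties satisfying `P`: the free abelian
group on (isomorphism classes of) varieties satisfying `P`, modulo the relations
`[X] = [Y] + [X ∖ Y]` for closed subvarieties `Y` of `X`. -/
def K0 (k : Type u) [Field k] (P : Variety k → Prop) : Type (u + 1) :=
  FreeAbelianGroup {V : Variety k // P V} ⧸ AddSubgroup.closure (cutRel P)

instance (P : Variety k → Prop) : AddCommGroup (K0 k P) :=
  QuotientAddGroup.Quotient.addCommGroup _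

/-- The class of a variety in the Grothendieck group. -/
def K0.cls {P : Variety k → Prop} (V : Variety k) (hV : P V) : K0 k P :=
  QuotientAddGroup.mk (FreeAbelianGroup.of ⟨V, hV⟩)

/-- `K_0(V_k^{(n)})`: the Grothendieck group of varieties of dimension at most `n`. -/
abbrev K0le (k : Type u) [Field k] (n : ℕ) : Type (u + 1) :=
  K0 k (fun V => V.dim ≤ (n : WithBot ℕ∞))

/-- `K_0[V_k]` (as an abelian group): the Grothendieck group of all varieties over `k`. -/
abbrev K0Var (k : Type u) [Field k] : Type (u + 1) := K0 k (fun _ => True)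

/-- The class of a variety in `K_0[V_k]`. -/
def K0Var.cls (V : Variety k) : K0Var k := K0.cls V trivial

/-- `K_0(V_k^{(n,n-1)})`: the Grothendieck group of varieties of dimension at most `n`,
where moreover the class of every variety of dimension `< n` is set to `0`. -/
def K0graded (k : Type u) [Field k] (n : ℕ) : Type (u + 1) :=
  FreeAbelianGroup {V : Variety k // V.dim ≤ (n : WithBot ℕ∞)} ⧸
    AddSubgroup.closure (cutRel (fun V => V.dim ≤ (n : WithBot ℕ∞)) ∪
      {a | ∃ X : {V : Variety k // V.dim ≤ (n : WithBot ℕ∞)},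
        X.1.dim < (n : WithBot ℕ∞) ∧ a = FreeAbelianGroup.of X})

instance (n : ℕ) : AddCommGroup (K0graded k n) :=
  QuotientAddGroup.Quotient.addCommGroup _

/-- The class of a variety in `K_0(V_k^{(n,n-1)})`. -/
def K0graded.cls (n : ℕ) (V : Variety k) (hV : V.dim ≤ (n : WithBot ℕ∞)) : K0graded k n :=
  QuotientAddGroup.mk (FreeAbelianGroup.of ⟨V, hV⟩)

/-- `x ∈ K_0(V_k^{(b)})` lies in the image of multiplication by `L = [𝔸¹]`, viewed as the
map `K_0(V_k^{(a)}) → K_0(V_k^{(b)})` sending `[Z]` to `[Z × 𝔸¹]`. -/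
def InMulLImage (a b : ℕ) (x : K0le k b) : Prop :=
  ∃ (m : ℕ) (c : Fin m → ℤ) (Z W : Fin m → Variety k)
    (_ : ∀ i, (Z i).dim ≤ (a : WithBot ℕ∞)) (hW : ∀ i, (W i).dim ≤ (b : WithBot ℕ∞)),
    (∀ i, ∃ A : Variety k, IsAffLine A ∧ IsProductOf (W i) (Z i) A) ∧
    x = ∑ i, c i • K0.cls (W i) (hW i)

/-- `L · χ = 0` in `K_0[V_k]`: there is a representation `χ = ∑ cᵢ [Zᵢ]` with
`∑ cᵢ [Zᵢ × 𝔸¹] = 0`. -/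
def MulLZero (χ : K0Var k) : Prop :=
  ∃ (m : ℕ) (c : Fin m → ℤ) (Z W : Fin m → Variety k),
    (∀ i, ∃ A : Variety k, IsAffLine A ∧ IsProductOf (W i) (Z i) A) ∧
    χ = ∑ i, c i • K0Var.cls (Z i) ∧
    (0 : K0Var k) = ∑ i, c i • K0Var.cls (W i)

/-- The subgroup of `K_0[V_k]` of multiples of `L`, i.e. the ideal generated by `L`
viewed as an additive subgroup. -/
def LMultiples (k : Type u) [Field k] : AddSubgroup (K0Var k) :=
  AddSubgroup.closure
    {y | ∃ (m : ℕ) (c : Fin m → ℤ) (Z W : Fin m → Variety k),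
      (∀ i, ∃ A : Variety k, IsAffLine A ∧ IsProductOf (W i) (Z i) A) ∧
      y = ∑ i, c i • K0Var.cls (W i)}

/-- `Z` realizes the closed complement `X ∖ U` of the open `U ⊆ X` as a variety. -/
def IsComplementOf (Z X : Variety k) (U : X.toScheme.Opens) : Prop :=
  ∃ i : Z.toScheme ⟶ X.toScheme, IsClosedImmersion i ∧ i ≫ X.str = Z.str ∧
    Set.range i.base = (U : Set X.toScheme)ᶜ

/-- The birational isomorphism between `n`-dimensional varieties `X ⇢ Y` represented by
an isomorphism `U → V` of open subvarieties is convenient: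
`[X ∖ U] - [Y ∖ V]` lies in the image of `·L : K_0(V_k^{(n-2)}) → K_0(V_k^{(n-1)})`. -/
def ConvenientRep (n : ℕ) (X Y : Variety k) (U : X.toScheme.Opens)
    (V : Y.toScheme.Opens) : Prop :=
  ∀ (ZX ZY : Variety k) (hZX : ZX.dim ≤ ((n - 1 : ℕ) : WithBot ℕ∞))
    (hZY : ZY.dim ≤ ((n - 1 : ℕ) : WithBot ℕ∞)),
    IsComplementOf ZX X U → IsComplementOf ZY Y V →
    InMulLImage (n - 2) (n - 1) (K0.cls ZX hZX - K0.cls ZY hZY)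

/-- A field `k` is convenient if every birational isomorphism between smooth projective
varieties over `k` is convenient. -/
def ConvenientField (k : Type u) [Field k] : Prop :=
  ∀ (n : ℕ) (X Y : Variety k), IsSmoothVar X → IsSmoothVar Y →
    IsProjectiveVar X → IsProjectiveVar Y →
    IrreducibleSpace X.toScheme → IrreducibleSpace Y.toScheme →
    X.dim = (n : WithBot ℕ∞) → Y.dim = (n : WithBot ℕ∞) →
    ∀ (U : X.toScheme.Opens) (V : Y.toScheme.Opens),
      Dense (U : Set X.toScheme) → Dense (V : Set Y.toScheme) →
      ∀ e : U.toScheme ≅ V.toScheme, e.hom ≫ V.ι ≫ Y.str = U.ι ≫ X.str →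
      ConvenientRep n X Y U V

end Variety
namespace Variety

variable {k : Type u} [Field k]

/-- The type of birational isomorphism classes of irreducible `n`-dimensional
varieties over `k` (the set `B_n`). -/
def BirClass (k : Type u) [Field k] (n : ℕ) : Type (u + 1) :=
  Quot (fun X Y : {V : Variety k // IrreducibleSpace V.toScheme ∧
    V.dim = (n : WithBot ℕ∞)} => BirEquiv X.1 Y.1)

/-- The type of stable birational isomorphism classes of irreducible varieties
over `k` (the set `SB`). -/
def StableBirClass (k : Type u) [Field k] : Type (u + 1) :=
  Quot (fun X Y : {V : Variety k // IrreducibleSpace V.toScheme} =>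
    StablyBirational X.1 Y.1)

/-- The family of varieties `C` together with the closed immersions `f i` realizes
exactly the `n`-dimensional irreducible components of `X`, each exactly once. -/
def RealizesComponents (n : ℕ) (X : Variety k) (m : ℕ)
    (C : Fin m → Variety k) (f : ∀ i, (C i).toScheme ⟶ X.toScheme) : Prop :=
  (∀ i, IsClosedImmersion (f i)) ∧ (∀ i, f i ≫ X.str = (C i).str) ∧
  Function.Injective (fun i => Set.range (f i).base) ∧
  (Set.range fun i => Set.range (f i).base) =
    {S | S ∈ irreducibleComponents X.toScheme ∧
      topologicalKrullDim S = (n : WithBot ℕ∞)}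

/-- `p : E ⟶ Z` is a Zariski-locally trivial `ℙ^ℓ`-bundle: every point of `Z` has an
open neighbourhood `W` such that `p⁻¹(W)` is isomorphic over `W` to `W × ℙ^ℓ`. -/
def IsProjBundle (ℓ : ℕ) {E Z : Variety k} (p : E.toScheme ⟶ Z.toScheme) : Prop :=
  ∀ z : Z.toScheme, ∃ W : Z.toScheme.Opens, z ∈ W ∧
    ∃ e : (p ⁻¹ᵁ W).toScheme ≅ Limits.pullback (W.ι ≫ Z.str) (ProjSpace.str k ℓ),
      e.hom ≫ Limits.pullback.fst (W.ι ≫ Z.str) (ProjSpace.str k ℓ) = p ∣_ W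

/-- `X` (of dimension `d`) has stable dimensional complexity `m`: `m` is the minimal
integer such that `X` is stably birational to `X' × 𝔸^(d-m)` for some variety `X'` of
dimension `m`. -/
def HasStableDimComplexity (X : Variety k) (d m : ℕ) : Prop :=
  (∃ X' A P : Variety k, X'.dim = (m : WithBot ℕ∞) ∧ IsAffSpace (d - m) A ∧
      IsProductOf P X' A ∧ StablyBirational X P) ∧
  ∀ j < m, ¬ ∃ X' A P : Variety k, X'.dim = (j : WithBot ℕ∞) ∧ IsAffSpace (d - j) A ∧
      IsProductOf P X' A ∧ StablyBirational X P

/-- Generators of the covering relations among smooth varieties: `[X] = ∑ᵢ [Xᵢ]`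
whenever `{Xᵢ → X}` is a finite family of locally closed embeddings of smooth
varieties with pairwise disjoint images whose union is all of `X`. -/
def smCutRel (k : Type u) [Field k] :
    Set (FreeAbelianGroup {V : Variety k // IsSmoothVar V}) :=
  {a | ∃ (X : {V : Variety k // IsSmoothVar V}) (m : ℕ)
        (P : Fin m → {V : Variety k // IsSmoothVar V})
        (f : ∀ i, (P i).1.toScheme ⟶ X.1.toScheme),
        (∀ i, IsImmersion (f i)) ∧ (∀ i, f i ≫ X.1.str = (P i).1.str) ∧
        (∀ i j, i ≠ j → Disjoint (Set.range (f i).base) (Set.range (f j).base)) ∧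
        (⋃ i, Set.range (f i).base) = Set.univ ∧
        a = FreeAbelianGroup.of X - ∑ i, FreeAbelianGroup.of (P i)}

/-- `K_0(V_k^{sm})`: the Grothendieck group of smooth varieties over `k`, with the
covering relations. -/
def K0sm (k : Type u) [Field k] : Type (u + 1) :=
  FreeAbelianGroup {V : Variety k // IsSmoothVar V} ⧸ AddSubgroup.closure (smCutRel k)

instance : AddCommGroup (K0sm k) := QuotientAddGroup.Quotient.addCommGroup _

/-- The class of a smooth variety in `K_0(V_k^{sm})`. -/
def K0sm.cls (V : Variety k) (hV : IsSmoothVar V) : K0sm k :=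
  QuotientAddGroup.mk (FreeAbelianGroup.of ⟨V, hV⟩)

end Variety
namespace Variety

variable {k : Type u} [Field k]

/-- The class of a variety in `K_0(V_k^{(n)})`. -/
def K0le.cls (n : ℕ) (V : Variety k) (hV : V.dim ≤ (n : WithBot ℕ∞)) : K0le k n :=
  K0.cls V hV

end Variety

open Variety

/-!
The points of a variety of dimension at most `n` whose residue field has transcendence degree `n`
over `k` are the generic points of its `n`-dimensional components. The number of such points with
residue field in a given isomorphism class over `k` is additive along closed subvarieties and
vanishes in dimension less than `n`, so it factors through `K_0(V_k^{(n,n-1)})`. Hence if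
`[X] = [Y]`, the `n`-dimensional components of `X` and `Y` correspond bijectively, with isomorphic
function fields. As varieties are reduced, these function fields are the local rings at the generic
points, and an isomorphism between them spreads out to an isomorphism of open neighbourhoods, which
may be shrunk so as to meet no other component. The disjoint union of these neighbourhoods is open
in both `X` and `Y`, and it contains every point of transcendence degree `n`; what is left has
smaller dimension.
-/

section TranscendenceDegree

variable {k A B : Type u} [Field k] [CommRing A] [CommRing B] [Algebra k A] [Algebra k B]

lemma toNat_trdeg_lt_of_surjective [IsDomain A] [IsDomain B] [Algebra.FiniteType k A]
    (f : A →ₐ[k] B) (hf : Function.Surjective f) {a : A} (ha : a ≠ 0) (hfa : f a = 0) :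
    Cardinal.toNat (Algebra.trdeg k B) < Cardinal.toNat (Algebra.trdeg k A) := by
  have : Algebra.FiniteType k B := .of_surjective f hf
  have hA : Algebra.trdeg k A < Cardinal.aleph0 := trdeg_lt_aleph0_of_finiteType
  have hB : Algebra.trdeg k B < Cardinal.aleph0 := trdeg_lt_aleph0_of_finiteType
  by_contra! hle
  obtain ⟨s, hs⟩ := exists_isTranscendenceBasis k B
  choose lift h_lift using hf
  have comp_lift : f ∘ (fun b : s ↦ lift b) = ((↑) : s → B) := funext fun b ↦ h_lift b
  have indep : AlgebraicIndependent k (fun b : s ↦ lift b) :=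
    AlgebraicIndependent.of_comp f (by rw [comp_lift]; exact hs.1)
  have le_card : Algebra.trdeg k A ≤ Cardinal.mk s := by
    rw [hs.cardinalMk_eq_trdeg]
    exact (Cardinal.toNat_le_iff_le_of_lt_aleph0 hA hB).1 hle
  -- The lifted basis is a transcendence basis of `A`, so `A` is algebraic over the subalgebra it
  -- generates, which therefore meets the nonzero ideal `ker f`.
  have alg := (indep.isTranscendenceBasis_of_trdeg_le hA le_card).isAlgebraic
  refine Ideal.comap_ne_bot_of_algebraic_mem
    (R := Algebra.adjoin k (Set.range fun b : s ↦ lift b)) (I := RingHom.ker f) ha hfa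
    (alg.isAlgebraic a) (eq_bot_iff.2 ?_)
  rintro ⟨c, hc⟩ (hfc : f c = 0)
  rw [Algebra.adjoin_range_eq_range_aeval] at hc
  obtain ⟨p, rfl⟩ := hc
  have aeval_eq_zero : MvPolynomial.aeval ((↑) : s → B) p = 0 :=
    calc MvPolynomial.aeval ((↑) : s → B) p
        = MvPolynomial.aeval (f ∘ fun b : s ↦ lift b) p := by rw [comp_lift]
      _ = f (MvPolynomial.aeval (fun b : s ↦ lift b) p) :=
        (MvPolynomial.comp_aeval_apply _ f p).symm
      _ = 0 := hfc
  have p_eq_zero : p = 0 := hs.1.eq_zero_of_aeval_eq_zero _ aeval_eq_zero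
  exact Subtype.ext (by simp [p_eq_zero])

lemma ringKrullDim_le_of_isIntegral (R S : Type*) [CommRing R] [CommRing S] [Algebra R S]
    [Algebra.IsIntegral R S] [FaithfulSMul R S] : ringKrullDim R ≤ ringKrullDim S := by
  refine iSup_le fun l ↦ ?_
  obtain ⟨q, -, _, hq⟩ := Ideal.exists_ideal_over_prime_of_isIntegral l.head.asIdeal (⊥ : Ideal S)
    (by rw [← RingHom.ker_eq_comap_bot, FaithfulSMul.ker_algebraMap_eq_bot]; exact bot_le)
  have : q.LiesOver l.head.asIdeal := ⟨hq.symm⟩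
  obtain ⟨L, hL, -⟩ := Ideal.exists_ltSeries_of_hasGoingUp l q
  rw [← hL]
  exact Order.LTSeries.length_le_krullDim L

lemma toNat_trdeg_le_ringKrullDim [IsDomain A] [Algebra.FiniteType k A] :
    (Cardinal.toNat (Algebra.trdeg k A) : WithBot ℕ∞) ≤ ringKrullDim A := by
  obtain ⟨s, g, hg, hint⟩ := exists_integral_inj_algHom_of_fg k A
  algebraize [g.toRingHom]
  have : FaithfulSMul (MvPolynomial (Fin s) k) A := (faithfulSMul_iff_algebraMap_injective _ _).2 hg
  have : IsScalarTower k (MvPolynomial (Fin s) k) A := .of_algebraMap_eq' g.comp_algebraMap.symm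
  have trdeg_eq : (s : Cardinal) = Algebra.trdeg k A := by
    simpa [trdeg_eq_zero (R := MvPolynomial (Fin s) k) (A := A), MvPolynomial.trdeg_of_isDomain]
      using trdeg_add_eq k (MvPolynomial (Fin s) k) (A := A)
  calc (Cardinal.toNat (Algebra.trdeg k A) : WithBot ℕ∞) = s := by simp [← trdeg_eq]
    _ = ringKrullDim (MvPolynomial (Fin s) k) := by
      simp [MvPolynomial.ringKrullDim_of_isNoetherianRing]
    _ ≤ ringKrullDim A := ringKrullDim_le_of_isIntegral _ _

lemma trdeg_residueField (p : Ideal A) [p.IsPrime] :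
    Algebra.trdeg k p.ResidueField = Algebra.trdeg k (A ⧸ p) := by
  have : Algebra.IsAlgebraic (A ⧸ p) p.ResidueField :=
    IsLocalization.isAlgebraic _ (nonZeroDivisors _)
  simpa [trdeg_eq_zero (R := A ⧸ p) (A := p.ResidueField)]
    using (trdeg_add_eq k (A ⧸ p) (A := p.ResidueField)).symm

lemma toNat_trdeg_residueField_lt [Algebra.FiniteType k A] {p q : Ideal A} [p.IsPrime]
    [q.IsPrime] (h : p < q) :
    Cardinal.toNat (Algebra.trdeg k q.ResidueField) <
      Cardinal.toNat (Algebra.trdeg k p.ResidueField) := by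
  rw [trdeg_residueField, trdeg_residueField]
  obtain ⟨a, haq, hap⟩ := Set.exists_of_ssubset h
  refine toNat_trdeg_lt_of_surjective (Ideal.Quotient.factorₐ k h.le)
    (Ideal.Quotient.factor_surjective h.le) (a := Ideal.Quotient.mk p a) ?_ ?_
  · rwa [Ne, Ideal.Quotient.eq_zero_iff_mem]
  · simpa [Ideal.Quotient.eq_zero_iff_mem] using haq

lemma toNat_trdeg_residueField_le_ringKrullDim [Algebra.FiniteType k A] (p : Ideal A)
    [p.IsPrime] :
    (Cardinal.toNat (Algebra.trdeg k p.ResidueField) : WithBot ℕ∞) ≤ ringKrullDim A := by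
  rw [trdeg_residueField]
  exact toNat_trdeg_le_ringKrullDim.trans (ringKrullDim_quotient_le p)

end TranscendenceDegree

section Topology

open TopologicalSpace Topology

variable {α : Type*} [TopologicalSpace α]

lemma topologicalKrullDim_lt_of_strictAnti_specializes [QuasiSober α] {n : ℕ} (d : α → ℕ)
    (hd : ∀ ⦃x y : α⦄, x ⤳ y → ¬ y ⤳ x → d y < d x) (hn : ∀ x, d x < n) :
    topologicalKrullDim α < n := by
  let gen (Z : IrreducibleCloseds α) : α := Z.isIrreducible.genericPoint
  have isGenericPoint_gen (Z : IrreducibleCloseds α) : IsGenericPoint (gen Z) Z :=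
    Z.isIrreducible.isGenericPoint_genericPoint Z.isClosed
  have strictMono : StrictMono (d ∘ gen) := fun Z W hZW ↦
    hd ((isGenericPoint_gen W).specializes (hZW.le (isGenericPoint_gen Z).mem)) fun h ↦
      hZW.not_ge ((isGenericPoint_gen W).def.symm.trans_subset
        (h.closure_subset.trans_eq (isGenericPoint_gen Z).def))
  refine Order.krullDim_lt_coe_iff.2 fun l ↦ ?_
  have := (l.map _ strictMono).head_add_length_le_nat
  exact (Nat.le_of_add_left_le this).trans_lt (hn _)

lemma mem_genericPoints_of_forall_specializes [QuasiSober α] {x : α}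
    (hx : ∀ y : α, y ⤳ x → y = x) : x ∈ genericPoints α := by
  obtain ⟨Z, hZ, hxZ⟩ :=
    exists_mem_irreducibleComponents_subset_of_isIrreducible _ (isIrreducible_singleton (x := x))
  have gen := hZ.1.isGenericPoint_genericPoint (isClosed_of_mem_irreducibleComponents Z hZ)
  rw [hx _ (gen.specializes (hxZ rfl))] at gen
  change closure {x} ∈ irreducibleComponents α
  rwa [gen.def]

/-- The set of points that lie on no irreducible component other than the closure of `x`. For a
generic point `x` of a Noetherian space this is an open neighbourhood of `x`. -/
def onlyOnClosure (x : α) : Set α := (⋃₀ (irreducibleComponents α \ {closure {x}}))ᶜ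

lemma isOpen_onlyOnClosure [NoetherianSpace α] (x : α) : IsOpen (onlyOnClosure x) := by
  rw [onlyOnClosure, isOpen_compl_iff, Set.sUnion_eq_biUnion]
  exact (NoetherianSpace.finite_irreducibleComponents.subset Set.sdiff_subset).isClosed_biUnion
    fun Z hZ ↦ isClosed_of_mem_irreducibleComponents Z hZ.1

lemma mem_onlyOnClosure_self {x : α} (hx : x ∈ genericPoints α) : x ∈ onlyOnClosure x := by
  rintro ⟨Z, ⟨hZ, hne⟩, hxZ⟩
  have hle : closure {x} ⊆ Z := closure_minimal (Set.singleton_subset_iff.2 hxZ)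
    (isClosed_of_mem_irreducibleComponents Z hZ)
  exact hne ((hx.2 hZ.1 hle).antisymm hle)

lemma disjoint_onlyOnClosure [T0Space α] {x y : α} (h : x ≠ y) :
    Disjoint (onlyOnClosure x) (onlyOnClosure y) := by
  refine Set.disjoint_left.2 fun z hx hy ↦ h ?_
  obtain ⟨Z, hZ, hzZ⟩ : z ∈ ⋃₀ irreducibleComponents α := by
    rw [sUnion_irreducibleComponents]; trivial
  have closure_eq {w : α} (hw : z ∈ onlyOnClosure w) : Z = closure {w} :=
    by_contra fun hne ↦ hw ⟨Z, ⟨hZ, hne⟩, hzZ⟩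
  exact (inseparable_iff_closure_eq.2 ((closure_eq hx).symm.trans (closure_eq hy))).eq

end Topology
section ResidueField

variable {S X Y : Scheme.{u}}

/-- The residue field of an `S`-scheme at a point, up to isomorphism over `S`. It is encoded as the
isomorphism class of the `S`-scheme `Spec κ(x)`. -/
def residueFieldClass (s : X ⟶ S) (x : X) : Quotient (isIsomorphicSetoid (Over S)) :=
  ⟦Over.mk (X.fromSpecResidueField x ≫ s)⟧

lemma residueFieldClass_eq_iff {sX : X ⟶ S} {sY : Y ⟶ S} {x : X} {y : Y} :
    residueFieldClass sX x = residueFieldClass sY y ↔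
      ∃ e : Y.residueField y ≅ X.residueField x,
        Spec.map e.hom ≫ Y.fromSpecResidueField y ≫ sY = X.fromSpecResidueField x ≫ sX := by
  refine Quotient.eq.trans ⟨fun ⟨φ⟩ ↦ ?_, fun ⟨e, he⟩ ↦ ?_⟩
  · refine ⟨(Scheme.Spec.preimageIso ((Over.forget S).mapIso φ)).unop, ?_⟩
    exact (congr_arg (· ≫ _) (Scheme.Spec.map_preimage φ.hom.left)).trans (Over.w φ.hom)
  · exact ⟨Over.isoMk (Scheme.Spec.mapIso e.op) he⟩

lemma isIso_residueFieldMap (f : X ⟶ Y) [IsPreimmersion f] (x : X) :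
    IsIso (f.residueFieldMap x) := by
  refine (ConcreteCategory.isIso_iff_bijective _).2 ⟨RingHom.injective _, fun b ↦ ?_⟩
  obtain ⟨b, rfl⟩ := X.residue_surjective x b
  obtain ⟨a, rfl⟩ := f.stalkMap_surjective x b
  exact ⟨Y.residue _ a, congr($(Scheme.residue_residueFieldMap f x) a)⟩

lemma residueFieldClass_comp (f : X ⟶ Y) [IsPreimmersion f] (s : Y ⟶ S) (x : X) :
    residueFieldClass (f ≫ s) x = residueFieldClass s (f x) := by
  have := isIso_residueFieldMap f x
  exact residueFieldClass_eq_iff.2 ⟨asIso (f.residueFieldMap x), by simp⟩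

end ResidueField

section ResidueTrdeg

variable {k : Type u} [Field k] {X Y : Scheme.{u}}

/-- The transcendence degree of the residue field at a point of a `k`-scheme, as a natural number.
It is finite whenever the scheme is locally of finite type; otherwise the junk value `0` may
occur. -/
def residueTrdeg (s : X ⟶ Spec (.of k)) (x : X) : ℕ :=
  letI := (Spec.preimage (X.fromSpecResidueField x ≫ s)).hom.toAlgebra
  Cardinal.toNat (Algebra.trdeg k (X.residueField x))

lemma residueTrdeg_eq_toNat_trdeg {s : X ⟶ Spec (.of k)} {x : X} {K : Type u} [CommRing K]
    [Algebra k K] (e : CommRingCat.of K ≅ X.residueField x)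
    (h : Spec.map e.hom ≫ Spec.map (CommRingCat.ofHom (algebraMap k K)) =
      X.fromSpecResidueField x ≫ s) :
    residueTrdeg s x = Cardinal.toNat (Algebra.trdeg k K) := by
  let _ := (Spec.preimage (X.fromSpecResidueField x ≫ s)).hom.toAlgebra
  have comp_eq : CommRingCat.ofHom (algebraMap k K) ≫ e.hom =
      Spec.preimage (X.fromSpecResidueField x ≫ s) :=
    Spec.map_injective (by rw [Spec.map_comp, Spec.map_preimage, h])
  exact congr_arg Cardinal.toNat (AlgEquiv.ofRingEquiv (f := e.commRingCatIsoToRingEquiv)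
    fun r ↦ congr($comp_eq r)).trdeg_eq.symm

lemma residueTrdeg_eq_of_residueFieldClass_eq {sX : X ⟶ Spec (.of k)} {sY : Y ⟶ Spec (.of k)}
    {x : X} {y : Y} (h : residueFieldClass sX x = residueFieldClass sY y) :
    residueTrdeg sX x = residueTrdeg sY y := by
  obtain ⟨e, he⟩ := residueFieldClass_eq_iff.1 h
  let _ := (Spec.preimage (Y.fromSpecResidueField y ≫ sY)).hom.toAlgebra
  refine residueTrdeg_eq_toNat_trdeg (K := Y.residueField y) e ?_
  rw [← he]
  exact congr_arg (_ ≫ ·) (Spec.map_preimage (Y.fromSpecResidueField y ≫ sY))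

lemma residueTrdeg_comp (f : X ⟶ Y) [IsPreimmersion f] (s : Y ⟶ Spec (.of k)) (x : X) :
    residueTrdeg (f ≫ s) x = residueTrdeg s (f x) :=
  residueTrdeg_eq_of_residueFieldClass_eq (residueFieldClass_comp f s x)

lemma residueTrdeg_Spec (R : CommRingCat.{u}) [Algebra k R] (p : PrimeSpectrum R) :
    residueTrdeg (X := Spec R) (Spec.map (CommRingCat.ofHom (algebraMap k R))) p =
      Cardinal.toNat (Algebra.trdeg k p.asIdeal.ResidueField) := by
  refine residueTrdeg_eq_toNat_trdeg (Scheme.Spec.residueFieldIso R p).symm ?_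
  rw [IsScalarTower.algebraMap_eq k R, CommRingCat.ofHom_comp, Spec.map_comp, ← Category.assoc]
  exact congr_arg (· ≫ _) (Scheme.Spec.map_residueFieldIso_inv_eq_fromSpecResidueField R p)

lemma exists_algebra_finiteType_of_Spec {R : CommRingCat.{u}} (s : Spec R ⟶ Spec (.of k))
    [LocallyOfFiniteType s] :
    ∃ _ : Algebra k R, Algebra.FiniteType k R ∧
      s = Spec.map (CommRingCat.ofHom (algebraMap k R)) := by
  obtain ⟨φ, rfl⟩ := Spec.map_surjective s
  have : φ.hom.FiniteType := HasRingHomProperty.Spec_iff (P := @LocallyOfFiniteType).1 ‹_›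
  exact ⟨φ.hom.toAlgebra, this, rfl⟩

lemma residueTrdeg_Spec_lt {R : CommRingCat.{u}} (s : Spec R ⟶ Spec (.of k))
    [LocallyOfFiniteType s] {p q : PrimeSpectrum R} (h : p < q) :
    residueTrdeg s q < residueTrdeg s p := by
  obtain ⟨_, _, rfl⟩ := exists_algebra_finiteType_of_Spec s
  rw [residueTrdeg_Spec, residueTrdeg_Spec]
  exact toNat_trdeg_residueField_lt h

lemma residueTrdeg_Spec_le {R : CommRingCat.{u}} (s : Spec R ⟶ Spec (.of k))
    [LocallyOfFiniteType s] (p : PrimeSpectrum R) :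
    (residueTrdeg s p : WithBot ℕ∞) ≤ ringKrullDim R := by
  obtain ⟨_, _, rfl⟩ := exists_algebra_finiteType_of_Spec s
  rw [residueTrdeg_Spec]
  exact toNat_trdeg_residueField_le_ringKrullDim p.asIdeal

lemma residueTrdeg_lt_of_specializes (s : X ⟶ Spec (.of k)) [LocallyOfFiniteType s] {x y : X}
    (h : x ⤳ y) (hne : x ≠ y) : residueTrdeg s y < residueTrdeg s x := by
  obtain ⟨R, j, _, ⟨y, rfl⟩, -⟩ :=
    Scheme.exists_affine_mem_range_and_range_subset (x := y) (U := ⊤) trivial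
  obtain ⟨x, rfl⟩ : x ∈ Set.range j := h.mem_open j.opensRange.2 ⟨y, rfl⟩
  rw [← residueTrdeg_comp, ← residueTrdeg_comp]
  refine residueTrdeg_Spec_lt (j ≫ s) (lt_of_le_of_ne ?_ fun hxy ↦ hne (congr_arg j hxy))
  exact (PrimeSpectrum.le_iff_specializes _ _).2 (j.isOpenEmbedding.isInducing.specializes_iff.1 h)

lemma residueTrdeg_le_topologicalKrullDim (s : X ⟶ Spec (.of k)) [LocallyOfFiniteType s] (x : X) :
    (residueTrdeg s x : WithBot ℕ∞) ≤ topologicalKrullDim X := by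
  obtain ⟨R, j, _, ⟨x, rfl⟩, -⟩ :=
    Scheme.exists_affine_mem_range_and_range_subset (x := x) (U := ⊤) trivial
  calc (residueTrdeg s (j x) : WithBot ℕ∞) = residueTrdeg (j ≫ s) x := by rw [residueTrdeg_comp]
    _ ≤ ringKrullDim R := residueTrdeg_Spec_le (j ≫ s) x
    _ = topologicalKrullDim (Spec R) := (PrimeSpectrum.topologicalKrullDim_eq_ringKrullDim R).symm
    _ ≤ topologicalKrullDim X := j.isOpenEmbedding.isInducing.topologicalKrullDim_le

lemma topologicalKrullDim_lt_of_residueTrdeg_lt (s : X ⟶ Spec (.of k)) [LocallyOfFiniteType s]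
    {Z : Set X} (hZ : IsClosed Z) {n : ℕ} (h : ∀ z ∈ Z, residueTrdeg s z < n) :
    topologicalKrullDim Z < n := by
  have := hZ.isClosedEmbedding_subtypeVal.quasiSober
  refine topologicalKrullDim_lt_of_strictAnti_specializes (fun z : Z ↦ residueTrdeg s z.1)
    (fun x y hxy hyx ↦ ?_) fun z ↦ h z z.2
  refine residueTrdeg_lt_of_specializes s ((subtype_specializes_iff x y).1 hxy) fun h_eq ↦ hyx ?_
  exact specializes_of_eq (Subtype.ext h_eq.symm)

end ResidueTrdeg

section SpreadingOut

variable {S X Y : Scheme.{u}}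

lemma exists_isOpenImmersion_lift_comp_eq {V Z : Scheme.{u}} (f : X ⟶ Y) (i : V ⟶ Y)
    [IsOpenImmersion i] (g : V ⟶ Z) (h : X ⟶ Z) (x : X) [X.IsGermInjectiveAt x]
    (t : Spec (X.presheaf.stalk x) ⟶ V) (hi : t ≫ i = X.fromSpecStalk x ≫ f)
    (hg : t ≫ g = X.fromSpecStalk x ≫ h) :
    ∃ (A : Scheme.{u}) (a : A ⟶ X) (l : A ⟶ V),
      IsOpenImmersion a ∧ x ∈ Set.range a ∧ l ≫ i = a ≫ f ∧ l ≫ g = a ≫ h := by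
  let U : X.Opens := f ⁻¹ᵁ i.opensRange
  have hxU : x ∈ U := by
    let c : Spec (X.presheaf.stalk x) := IsLocalRing.closedPoint (X.presheaf.stalk x)
    have fromSpecStalk_c : X.fromSpecStalk x c = x := Scheme.fromSpecStalk_closedPoint
    exact ⟨t c, by
      rw [← Scheme.Hom.comp_apply, hi, Scheme.Hom.comp_apply, fromSpecStalk_c]⟩
  obtain ⟨u, rfl⟩ : ∃ u : U.toScheme, U.ι u = x := ⟨⟨x, hxU⟩, rfl⟩
  let l : U.toScheme ⟶ V := IsOpenImmersion.lift i (U.ι ≫ f) (by rintro _ ⟨v, rfl⟩; exact v.2)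
  have hl : l ≫ i = U.ι ≫ f := IsOpenImmersion.lift_fac _ _ _
  have fromSpecStalk_l : U.toScheme.fromSpecStalk u ≫ l = Spec.map (U.ι.stalkMap u) ≫ t := by
    rw [← cancel_mono i, Category.assoc, Category.assoc, hl, hi,
      Scheme.SpecMap_stalkMap_fromSpecStalk_assoc]
  have : U.toScheme.IsGermInjectiveAt u := isGermInjectiveAt_iff_of_isOpenImmersion.1 ‹_›
  obtain ⟨W, hxW, hW⟩ := spread_out_unique_of_isGermInjective' (x := u) (l ≫ g) (U.ι ≫ h) (by
    rw [reassoc_of% fromSpecStalk_l, hg, Scheme.SpecMap_stalkMap_fromSpecStalk_assoc])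
  exact ⟨W, W.ι ≫ U.ι, W.ι ≫ l, inferInstance, ⟨⟨u, hxW⟩, rfl⟩, by simp [hl], by simpa using hW⟩

lemma exists_isOpenImmersion_leftInverse_of_stalk {U : X.Opens} {V : Y.Opens} {u : U.toScheme}
    {y : Y} [X.IsGermInjectiveAt (U.ι u)] (hu : U.ι u ∈ U) (hy : y ∈ V) {f : U.toScheme ⟶ Y}
    {g : V.toScheme ⟶ X} (e : Y.presheaf.stalk y ≅ X.presheaf.stalk (U.ι u))
    (hf : Spec.map e.hom ≫ Y.fromSpecStalk y = U.fromSpecStalkOfMem (U.ι u) hu ≫ f)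
    (hg : Spec.map e.inv ≫ X.fromSpecStalk (U.ι u) = V.fromSpecStalkOfMem y hy ≫ g) :
    ∃ (A : Scheme.{u}) (a : A ⟶ U.toScheme) (fA : A ⟶ V.toScheme),
      IsOpenImmersion a ∧ u ∈ Set.range a ∧ fA ≫ V.ι = a ≫ f ∧ fA ≫ g = a ≫ U.ι := by
  have : U.toScheme.IsGermInjectiveAt u := isGermInjectiveAt_iff_of_isOpenImmersion.1 ‹_›
  have fromSpecStalk_u : Spec.map (U.ι.stalkMap u) ≫ U.fromSpecStalkOfMem (U.ι u) hu =
      U.toScheme.fromSpecStalk u := by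
    rw [← cancel_mono U.ι, Category.assoc, Scheme.Opens.fromSpecStalkOfMem_ι,
      Scheme.SpecMap_stalkMap_fromSpecStalk]
  refine exists_isOpenImmersion_lift_comp_eq f V.ι g U.ι u
    (Spec.map (U.ι.stalkMap u) ≫ Spec.map e.hom ≫ V.fromSpecStalkOfMem y hy) ?_ ?_
  · rw [Category.assoc, Category.assoc, Scheme.Opens.fromSpecStalkOfMem_ι, hf,
      reassoc_of% fromSpecStalk_u]
  · rw [Category.assoc, Category.assoc, ← hg, ← Spec.map_comp_assoc (f := e.inv), Iso.inv_hom_id,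
      Spec.map_id, Category.id_comp, Scheme.SpecMap_stalkMap_fromSpecStalk]

/-- Here `g ∘ f` is the identity on the open `A` of `U` and `f ∘ g` is so on the open `B` of `V`.
The fibre product of `A` and `B` over `V` is also their fibre product over `U`, so it is open in
both. -/
lemma exists_isOpenImmersion_of_locally_inverse {U V A B : Scheme.{u}} {iU : U ⟶ X} {iV : V ⟶ Y}
    [IsOpenImmersion iU] [IsOpenImmersion iV] {f : U ⟶ Y} {g : V ⟶ X} {a : A ⟶ U} {b : B ⟶ V}
    [IsOpenImmersion a] [IsOpenImmersion b] {fA : A ⟶ V} {gB : B ⟶ U}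
    (hfA : fA ≫ iV = a ≫ f) (hgfA : fA ≫ g = a ≫ iU)
    (hgB : gB ≫ iU = b ≫ g) (hfgB : gB ≫ f = b ≫ iV) {x : A} {y : B} (hxy : f (a x) = iV (b y)) :
    ∃ (P : Scheme.{u}) (p : P ⟶ A) (q : P ⟶ B), IsOpenImmersion p ∧ IsOpenImmersion q ∧
      p ≫ fA = q ≫ b ∧ ∃ z, p z = x ∧ q z = y := by
  let p := pullback.fst fA b
  let q := pullback.snd fA b
  have comp_fA : p ≫ fA = q ≫ b := pullback.condition
  have comp_a : p ≫ a = q ≫ gB := by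
    rw [← cancel_mono iU, Category.assoc, Category.assoc, ← hgfA, hgB, reassoc_of% comp_fA]
  have isPullback : IsPullback p q a gB := by
    refine ⟨⟨comp_a⟩, ⟨PullbackCone.IsLimit.mk _
      (fun s ↦ pullback.lift s.fst s.snd ?_) (fun s ↦ ?_) (fun s ↦ ?_) fun s m hfst hsnd ↦ ?_⟩⟩
    · rw [← cancel_mono iV, Category.assoc, Category.assoc, hfA, ← hfgB,
        reassoc_of% s.condition]
    · exact pullback.lift_fst _ _ _
    · exact pullback.lift_snd _ _ _
    · exact pullback.hom_ext (hfst.trans (pullback.lift_fst _ _ _).symm)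
        (hsnd.trans (pullback.lift_snd _ _ _).symm)
  obtain ⟨z, hz⟩ := Scheme.Pullback.exists_preimage_pullback (f := fA) (g := b) x y
    (iV.isEmbedding.injective (by
      rw [← hxy, ← Scheme.Hom.comp_apply, ← Scheme.Hom.comp_apply, hfA]))
  exact ⟨_, p, q, inferInstance, MorphismProperty.of_isPullback isPullback ‹_›, comp_fA, z, hz⟩

lemma apply_eq_of_fromSpecStalkOfMem_comp_eq {U : X.Opens} {u : U.toScheme} {y : Y} (hu : U.ι u ∈ U)
    {f : U.toScheme ⟶ Y} {φ : Y.presheaf.stalk y ⟶ X.presheaf.stalk (U.ι u)} [IsLocalHom φ.hom]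
    (hf : Spec.map φ ≫ Y.fromSpecStalk y = U.fromSpecStalkOfMem (U.ι u) hu ≫ f) : f u = y := by
  let c : Spec (X.presheaf.stalk (U.ι u)) := IsLocalRing.closedPoint (X.presheaf.stalk (U.ι u))
  have fromSpecStalkOfMem_c : U.fromSpecStalkOfMem (U.ι u) hu c = u := by
    refine U.ι.isEmbedding.injective ?_
    rw [← Scheme.Hom.comp_apply, Scheme.Opens.fromSpecStalkOfMem_ι]
    exact Scheme.fromSpecStalk_closedPoint
  rw [← fromSpecStalkOfMem_c, ← Scheme.Hom.comp_apply, ← hf, Scheme.Hom.comp_apply]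
  exact (congr_arg _ Spec_closedPoint).trans Scheme.fromSpecStalk_closedPoint

theorem exists_isOpenImmersion_of_stalk_iso (sX : X ⟶ S) (sY : Y ⟶ S) [LocallyOfFiniteType sX]
    [LocallyOfFiniteType sY] (x : X) (y : Y) [X.IsGermInjectiveAt x] [Y.IsGermInjectiveAt y]
    (e : Y.presheaf.stalk y ≅ X.presheaf.stalk x)
    (he : Spec.map e.hom ≫ Y.fromSpecStalk y ≫ sY = X.fromSpecStalk x ≫ sX) :
    ∃ (P : Scheme.{u}) (i : P ⟶ X) (j : P ⟶ Y), IsOpenImmersion i ∧ IsOpenImmersion j ∧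
      i ≫ sX = j ≫ sY ∧ ∃ p, i p = x ∧ j p = y := by
  have he' : Spec.map e.inv ≫ X.fromSpecStalk x ≫ sX = Y.fromSpecStalk y ≫ sY := by
    rw [← he, ← Spec.map_comp_assoc, Iso.hom_inv_id, Spec.map_id, Category.id_comp]
  obtain ⟨U, hxU, f, hf, hfs⟩ :=
    spread_out_of_isGermInjective' sX sY (Spec.map e.hom ≫ Y.fromSpecStalk y) (by simpa using he)
  obtain ⟨V, hyV, g, hg, -⟩ :=
    spread_out_of_isGermInjective' sY sX (Spec.map e.inv ≫ X.fromSpecStalk x) (by simpa using he')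
  obtain ⟨u, rfl⟩ : ∃ u : U.toScheme, U.ι u = x := ⟨⟨x, hxU⟩, rfl⟩
  obtain ⟨v, rfl⟩ : ∃ v : V.toScheme, V.ι v = y := ⟨⟨y, hyV⟩, rfl⟩
  obtain ⟨A, a, fA, _, ⟨u, rfl⟩, hfA, hgfA⟩ :=
    exists_isOpenImmersion_leftInverse_of_stalk hxU hyV e hf hg
  obtain ⟨B, b, gB, _, ⟨v, rfl⟩, hgB, hfgB⟩ :=
    exists_isOpenImmersion_leftInverse_of_stalk hyV hxU e.symm hg hf
  obtain ⟨P, p, q, _, _, hpq, z, rfl, rfl⟩ := exists_isOpenImmersion_of_locally_inverse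
    hfA hgfA hgB hfgB (apply_eq_of_fromSpecStalkOfMem_comp_eq hxU hf)
  refine ⟨P, p ≫ a ≫ U.ι, q ≫ b ≫ V.ι, inferInstance, inferInstance, ?_, z, by simp, by simp⟩
  simp only [Category.assoc]
  rw [← reassoc_of% hpq, reassoc_of% hfA, hfs]

end SpreadingOut

section ReducedGenericPoint

variable {S X Y : Scheme.{u}}

lemma isIso_residue_of_forall_specializes [IsReduced X] {x : X} (hx : ∀ x', x' ⤳ x → x' = x) :
    IsIso (X.residue x) := by
  have fromSpecStalk_eq (p : Spec (X.presheaf.stalk x)) : X.fromSpecStalk x p = x :=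
    hx _ (Scheme.range_fromSpecStalk.subset ⟨p, rfl⟩)
  have subsingleton : Subsingleton (PrimeSpectrum (X.presheaf.stalk x)) := ⟨fun p q ↦
    (X.fromSpecStalk x).isEmbedding.injective
      ((fromSpecStalk_eq p).trans (fromSpecStalk_eq q).symm)⟩
  have isField : IsField (X.presheaf.stalk x) :=
    PrimeSpectrum.subsingleton_iff_isField_of_isReduced.1 subsingleton
  let _ := isField.toField
  exact (ConcreteCategory.isIso_iff_bijective _).2
    ⟨RingHom.injective (X.residue x).hom, X.residue_surjective x⟩

theorem exists_isOpenImmersion_of_residueFieldClass_eq [IsReduced X] [IsReduced Y]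
    {sX : X ⟶ S} {sY : Y ⟶ S} [LocallyOfFiniteType sX] [LocallyOfFiniteType sY] {x : X} {y : Y}
    [X.IsGermInjectiveAt x] [Y.IsGermInjectiveAt y] (hx : ∀ x', x' ⤳ x → x' = x)
    (hy : ∀ y', y' ⤳ y → y' = y) (h : residueFieldClass sX x = residueFieldClass sY y) :
    ∃ (P : Scheme.{u}) (i : P ⟶ X) (j : P ⟶ Y), IsOpenImmersion i ∧ IsOpenImmersion j ∧
      i ≫ sX = j ≫ sY ∧ ∃ p, i p = x ∧ j p = y := by
  obtain ⟨e, he⟩ := residueFieldClass_eq_iff.1 h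
  have := isIso_residue_of_forall_specializes hx
  have := isIso_residue_of_forall_specializes hy
  refine exists_isOpenImmersion_of_stalk_iso sX sY x y
    (asIso (Y.residue y) ≪≫ e ≪≫ (asIso (X.residue x)).symm) ?_
  rw [← cancel_epi (Spec.map (X.residue x)), ← Spec.map_comp_assoc]
  simpa [Scheme.fromSpecResidueField] using he

lemma exists_isOpenImmersion_range_subset {P : Scheme.{u}} (i : P ⟶ X) (j : P ⟶ Y)
    (U : X.Opens) (V : Y.Opens) (p : P) (hU : i p ∈ U) (hV : j p ∈ V) :
    ∃ (Q : Scheme.{u}) (q : Q ⟶ P), IsOpenImmersion q ∧ p ∈ Set.range q ∧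
      Set.range (q ≫ i) ⊆ U ∧ Set.range (q ≫ j) ⊆ V := by
  let W : P.Opens := i ⁻¹ᵁ U ⊓ j ⁻¹ᵁ V
  refine ⟨W, W.ι, inferInstance, ⟨⟨p, hU, hV⟩, rfl⟩, ?_, ?_⟩
  · rintro _ ⟨w, rfl⟩; exact w.2.1
  · rintro _ ⟨w, rfl⟩; exact w.2.2

end ReducedGenericPoint

section Matching

lemma exists_equiv_of_card_fiber_eq {α β γ : Type*} [Finite α] [Finite β] {f : α → γ} {g : β → γ}
    (h : ∀ c, Nat.card {a // f a = c} = Nat.card {b // g b = c}) :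
    ∃ e : α ≃ β, ∀ a, g (e a) = f a :=
  ⟨.ofFiberEquiv fun c ↦ (Finite.card_eq.1 (h c)).some, Equiv.ofFiberEquiv_map _⟩

end Matching

namespace Variety

variable {k : Type u} [Field k]

attribute [instance] reduced separated locallyOfFiniteType quasiCompact

instance (V : Variety k) : IsNoetherian V.toScheme :=
  have := LocallyOfFiniteType.isLocallyNoetherian V.str
  have := QuasiCompact.compactSpace_of_compactSpace V.str
  {}

section TopPoints

variable {n : ℕ} {V : Variety k}

lemma residueTrdeg_le (hV : V.dim ≤ n) (v : V.toScheme) : residueTrdeg V.str v ≤ n :=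
  Nat.cast_le.1 ((residueTrdeg_le_topologicalKrullDim V.str v).trans hV)

lemma eq_of_specializes (hV : V.dim ≤ n) {v w : V.toScheme} (hv : residueTrdeg V.str v = n)
    (h : w ⤳ v) : w = v := by
  by_contra hne
  have := residueTrdeg_lt_of_specializes V.str h hne
  have := residueTrdeg_le hV w
  lia

lemma mem_genericPoints (hV : V.dim ≤ n) {v : V.toScheme} (hv : residueTrdeg V.str v = n) :
    v ∈ genericPoints V.toScheme :=
  mem_genericPoints_of_forall_specializes fun _ ↦ eq_of_specializes hV hv

lemma finite_setOf_residueTrdeg_eq (hV : V.dim ≤ n) :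
    {v : V.toScheme | residueTrdeg V.str v = n}.Finite :=
  (genericPoints.finite TopologicalSpace.NoetherianSpace.finite_irreducibleComponents).subset
    fun _ ↦ mem_genericPoints hV

lemma topologicalKrullDim_compl_range_lt {U : Scheme.{u}} (j : U ⟶ V.toScheme) [IsOpenImmersion j]
    (hV : V.dim ≤ n) (h : ∀ v, residueTrdeg V.str v = n → v ∈ Set.range j) :
    topologicalKrullDim ((Set.range j)ᶜ : Set V.toScheme) < n :=
  topologicalKrullDim_lt_of_residueTrdeg_lt V.str j.isOpenEmbedding.isOpen_range.isClosed_compl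
    fun v hv ↦ (residueTrdeg_le hV v).lt_of_ne fun h_eq ↦ hv (h v h_eq)

end TopPoints

section Count

/-- The points of a variety whose residue field has transcendence degree `n` and isomorphism
class `c` over `k`. In dimension at most `n` they are the generic points of the `n`-dimensional
components with function field of class `c`. -/
def topPoints (n : ℕ) (c : Quotient (isIsomorphicSetoid (Over (Spec (.of k))))) (V : Variety k) :
    Set V.toScheme :=
  {v | residueTrdeg V.str v = n ∧ residueFieldClass V.str v = c}

variable {n : ℕ} {c : Quotient (isIsomorphicSetoid (Over (Spec (.of k))))} {V W : Variety k}

lemma finite_topPoints (hV : V.dim ≤ n) : (topPoints n c V).Finite :=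
  (finite_setOf_residueTrdeg_eq hV).subset fun _ hv ↦ hv.1

lemma topPoints_eq_empty (hV : V.dim < n) : topPoints n c V = ∅ :=
  Set.eq_empty_of_forall_notMem fun v hv ↦
    (hv.1 ▸ residueTrdeg_le_topologicalKrullDim V.str v).not_gt hV

lemma preimage_topPoints (f : V.toScheme ⟶ W.toScheme) [IsPreimmersion f]
    (hf : f ≫ W.str = V.str) : f ⁻¹' topPoints n c W = topPoints n c V := by
  ext v
  simp only [topPoints, Set.mem_preimage, Set.mem_ofPred_eq, ← hf, residueTrdeg_comp,
    residueFieldClass_comp]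

lemma ncard_topPoints (f : V.toScheme ⟶ W.toScheme) [IsPreimmersion f] (hf : f ≫ W.str = V.str) :
    (topPoints n c V).ncard = (topPoints n c W ∩ Set.range f).ncard := by
  rw [← preimage_topPoints f hf, ← Set.image_preimage_eq_inter_range,
    Set.ncard_image_of_injective _ f.isEmbedding.injective]

lemma ncard_topPoints_of_iso (e : V.toScheme ≅ W.toScheme) (he : e.hom ≫ W.str = V.str) :
    (topPoints n c V).ncard = (topPoints n c W).ncard := by
  rw [ncard_topPoints e.hom he, e.hom.surjective.range_eq, Set.inter_univ]

lemma ncard_topPoints_eq_add (hV : V.dim ≤ n) {Z U : Variety k} (i : Z.toScheme ⟶ V.toScheme)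
    (j : U.toScheme ⟶ V.toScheme) [IsPreimmersion i] [IsPreimmersion j] (hi : i ≫ V.str = Z.str)
    (hj : j ≫ V.str = U.str) (h : Set.range j = (Set.range i)ᶜ) :
    (topPoints n c V).ncard = (topPoints n c Z).ncard + (topPoints n c U).ncard := by
  rw [ncard_topPoints i hi, ncard_topPoints j hj, h, ← Set.sdiff_eq]
  exact (Set.ncard_inter_add_ncard_sdiff_eq_ncard _ _ (finite_topPoints hV)).symm

end Count

lemma K0graded.eq_of_cls_eq {G : Type*} [AddCommGroup G] {n : ℕ} (F : Variety k → G)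
    (map_iso : ∀ V W : Variety k, V.dim ≤ n →
      (∃ e : V.toScheme ≅ W.toScheme, e.hom ≫ W.str = V.str) → F V = F W)
    (map_cut : ∀ (V Z U : Variety k) (i : Z.toScheme ⟶ V.toScheme) (j : U.toScheme ⟶ V.toScheme),
      V.dim ≤ n → IsClosedImmersion i → IsOpenImmersion j → i ≫ V.str = Z.str →
      j ≫ V.str = U.str → Set.range j = (Set.range i)ᶜ → F V = F Z + F U)
    (map_lt : ∀ V : Variety k, V.dim < n → F V = 0)
    {X Y : Variety k} {hX : X.dim ≤ n} {hY : Y.dim ≤ n} (h : cls n X hX = cls n Y hY) :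
    F X = F Y := by
  let L : FreeAbelianGroup {V : Variety k // V.dim ≤ n} →+ G := FreeAbelianGroup.lift fun V ↦ F V.1
  have L_of (V) : L (.of V) = F V.1 := FreeAbelianGroup.lift_apply_of _ _
  suffices -.of ⟨X, hX⟩ + .of ⟨Y, hY⟩ ∈ L.ker by
    rwa [AddMonoidHom.mem_ker, map_add, map_neg, neg_add_eq_zero, L_of, L_of] at this
  refine (AddSubgroup.closure_le L.ker).2 ?_ (QuotientAddGroup.eq.1 h)
  rintro _ ((⟨V, W, e, rfl⟩ | ⟨V, Z, U, i, j, hi, hj, hiV, hjV, h, rfl⟩) | ⟨V, hV, rfl⟩)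
  · simp [L_of, map_iso _ _ V.2 e]
  · simp [L_of, map_cut _ _ _ i j V.2 hi hj hiV hjV h]
  · simp [L_of, map_lt _ hV]

lemma ncard_topPoints_eq_of_cls_eq {n : ℕ} {X Y : Variety k} {hX : X.dim ≤ n} {hY : Y.dim ≤ n}
    (h : K0graded.cls n X hX = K0graded.cls n Y hY)
    (c : Quotient (isIsomorphicSetoid (Over (Spec (.of k))))) :
    (topPoints n c X).ncard = (topPoints n c Y).ncard := by
  refine Nat.cast_injective (K0graded.eq_of_cls_eq (fun V ↦ ((topPoints n c V).ncard : ℤ))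
    ?_ ?_ ?_ h)
  · rintro V W - ⟨e, he⟩
    rw [ncard_topPoints_of_iso e he]
  · intro V Z U i j hV _ _ hi hj h
    exact congr_arg Nat.cast (ncard_topPoints_eq_add hV i j hi hj h)
  · intro V hV
    simp [topPoints_eq_empty hV]

lemma ncard_topPoints_eq_card_fiber (n : ℕ)
    (c : Quotient (isIsomorphicSetoid (Over (Spec (.of k))))) (V : Variety k) :
    (topPoints n c V).ncard = Nat.card {v : {v : V.toScheme // residueTrdeg V.str v = n} //
      residueFieldClass V.str v.1 = c} :=
  Nat.card_congr (Equiv.subtypeSubtypeEquivSubtypeInter (residueTrdeg V.str · = n)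
    (residueFieldClass V.str · = c)).symm

lemma exists_equiv_residueFieldClass_eq {n : ℕ} {X Y : Variety k} {hX : X.dim ≤ n}
    {hY : Y.dim ≤ n} (h : K0graded.cls n X hX = K0graded.cls n Y hY) :
    ∃ e : {x : X.toScheme // residueTrdeg X.str x = n} ≃
        {y : Y.toScheme // residueTrdeg Y.str y = n},
      ∀ x, residueFieldClass Y.str (e x).1 = residueFieldClass X.str x.1 := by
  have : Finite {x : X.toScheme // residueTrdeg X.str x = n} :=
    (finite_setOf_residueTrdeg_eq hX).to_subtype
  have : Finite {y : Y.toScheme // residueTrdeg Y.str y = n} :=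
    (finite_setOf_residueTrdeg_eq hY).to_subtype
  refine exists_equiv_of_card_fiber_eq
    (f := fun x : {x : X.toScheme // residueTrdeg X.str x = n} ↦ residueFieldClass X.str x.1)
    (g := fun y : {y : Y.toScheme // residueTrdeg Y.str y = n} ↦ residueFieldClass Y.str y.1)
    fun c ↦ ?_
  rw [← ncard_topPoints_eq_card_fiber, ← ncard_topPoints_eq_card_fiber,
    ncard_topPoints_eq_of_cls_eq h]

end Variety

namespace Variety

variable {k : Type u} [Field k]

/-- An open subscheme of a variety, as a variety. It is given by an open immersion rather than by
an open subset so that one scheme can be viewed as an open subvariety of several varieties. -/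
def ofIsOpenImmersion (V : Variety k) {U : Scheme.{u}} (j : U ⟶ V.toScheme) [IsOpenImmersion j] :
    Variety k where
  toScheme := U
  str := j ≫ V.str
  reduced := isReduced_of_isOpenImmersion j
  separated := inferInstance
  locallyOfFiniteType := inferInstance
  quasiCompact := inferInstance

lemma PiecewiseIso.refl (V : Variety k) : PiecewiseIso V V :=
  ⟨1, fun _ ↦ V, fun _ ↦ V, fun _ ↦ 𝟙 _, fun _ ↦ 𝟙 _, fun _ ↦ inferInstance,
    fun _ ↦ inferInstance, by simp, by simp, fun i j h ↦ absurd (Subsingleton.elim i j) h,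
    fun i j h ↦ absurd (Subsingleton.elim i j) h, by simp [Set.iUnion_const],
    by simp [Set.iUnion_const], fun _ ↦ ⟨.refl _, by simp⟩⟩

lemma exists_isOpenImmersion_onlyOnClosure {n : ℕ} {X Y : Variety k} (hX : X.dim ≤ n)
    (hY : Y.dim ≤ n) {x : X.toScheme} {y : Y.toScheme} (hx : residueTrdeg X.str x = n)
    (hy : residueTrdeg Y.str y = n) (h : residueFieldClass X.str x = residueFieldClass Y.str y) :
    ∃ (P : Scheme.{u}) (i : P ⟶ X.toScheme) (j : P ⟶ Y.toScheme), IsOpenImmersion i ∧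
      IsOpenImmersion j ∧ i ≫ X.str = j ≫ Y.str ∧ x ∈ Set.range i ∧ y ∈ Set.range j ∧
      Set.range i ⊆ onlyOnClosure x ∧ Set.range j ⊆ onlyOnClosure y := by
  obtain ⟨P, i, j, _, _, hij, p, rfl, rfl⟩ := exists_isOpenImmersion_of_residueFieldClass_eq
    (fun _ ↦ eq_of_specializes hX hx) (fun _ ↦ eq_of_specializes hY hy) h
  obtain ⟨Q, q, _, ⟨r, rfl⟩, hi, hj⟩ := exists_isOpenImmersion_range_subset i j
    ⟨_, isOpen_onlyOnClosure _⟩ ⟨_, isOpen_onlyOnClosure _⟩ p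
    (mem_onlyOnClosure_self (mem_genericPoints hX hx))
    (mem_onlyOnClosure_self (mem_genericPoints hY hy))
  exact ⟨Q, q ≫ i, q ≫ j, inferInstance, inferInstance, by simp [hij], ⟨r, by simp⟩,
    ⟨r, by simp⟩, hi, hj⟩

end Variety

lemma range_subset_range_sigmaDesc {ι : Type u} {P : ι → Scheme.{u}} {X : Scheme.{u}}
    (i : ∀ a, P a ⟶ X) (a : ι) : Set.range (i a) ⊆ Set.range (Sigma.desc i) := by
  rintro _ ⟨p, rfl⟩
  exact ⟨Sigma.ι P a p, by rw [← Scheme.Hom.comp_apply, Sigma.ι_desc]⟩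

theorem piecewise_iso_up_to_lower_dim_general {k : Type u} [Field k] {n : ℕ} {X Y : Variety k}
    {hX : X.dim ≤ n} {hY : Y.dim ≤ n} (h : K0graded.cls n X hX = K0graded.cls n Y hY) :
    ∃ (W : Variety k) (i : W.toScheme ⟶ X.toScheme) (j : W.toScheme ⟶ Y.toScheme),
      IsOpenImmersion i ∧ IsOpenImmersion j ∧ i ≫ X.str = W.str ∧ j ≫ Y.str = W.str ∧
      topologicalKrullDim ((Set.range i.base)ᶜ : Set X.toScheme) < n ∧
      topologicalKrullDim ((Set.range j.base)ᶜ : Set Y.toScheme) < n := by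
  obtain ⟨e, he⟩ := exists_equiv_residueFieldClass_eq h
  choose P i j i_open j_open hij mem_i mem_j hi hj using fun x ↦
    exists_isOpenImmersion_onlyOnClosure hX hY x.2 (e x).2 (he x).symm
  have : IsOpenImmersion (Sigma.desc i) := isOpenImmersion_sigmaDesc _ _ fun x x' hne ↦
    (disjoint_onlyOnClosure (Subtype.coe_ne_coe.2 hne)).mono (hi x) (hi x')
  have : IsOpenImmersion (Sigma.desc j) := isOpenImmersion_sigmaDesc _ _ fun x x' hne ↦
    (disjoint_onlyOnClosure (Subtype.coe_ne_coe.2 (e.injective.ne hne))).mono (hj x) (hj x')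
  refine ⟨X.ofIsOpenImmersion (Sigma.desc i), Sigma.desc i, Sigma.desc j, ‹_›, ‹_›, rfl,
    Sigma.hom_ext _ _ fun x ↦ ?_,
    topologicalKrullDim_compl_range_lt (Sigma.desc i) hX fun x hx ↦ ?_,
    topologicalKrullDim_compl_range_lt (Sigma.desc j) hY fun y hy ↦ ?_⟩
  · simp [ofIsOpenImmersion, hij]
  · exact range_subset_range_sigmaDesc i _ (mem_i ⟨x, hx⟩)
  · obtain ⟨x, hx⟩ := e.surjective ⟨y, hy⟩
    have mem_j_x := mem_j x
    rw [hx] at mem_j_x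
    exact range_subset_range_sigmaDesc j x mem_j_x

/-- If `[X] = [Y]` in `K_0(V_k^{(n,n-1)})` for varieties of dimension
at most `n`, then one can write `X = U ⊎ X'` and `Y = V ⊎ Y'` with `U, V` open,
`U` and `V` piecewise isomorphic, and `dim X', dim Y' < n`. -/
theorem piecewise_iso_up_to_lower_dim (k : Type u) [Field k] (n : ℕ) (X Y : Variety k)
    (hX : X.dim ≤ (n : WithBot ℕ∞)) (hY : Y.dim ≤ (n : WithBot ℕ∞))
    (h : K0graded.cls n X hX = K0graded.cls n Y hY) :
    ∃ (U V : Variety k) (jU : U.toScheme ⟶ X.toScheme) (jV : V.toScheme ⟶ Y.toScheme),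
      IsOpenImmersion jU ∧ IsOpenImmersion jV ∧
      jU ≫ X.str = U.str ∧ jV ≫ Y.str = V.str ∧
      PiecewiseIso U V ∧
      topologicalKrullDim ((Set.range jU.base)ᶜ : Set X.toScheme) < (n : WithBot ℕ∞) ∧
      topologicalKrullDim ((Set.range jV.base)ᶜ : Set Y.toScheme) < (n : WithBot ℕ∞) := by
  obtain ⟨W, i, j, hi, hj, hiW, hjW, hXW, hYW⟩ := piecewise_iso_up_to_lower_dim_general h
  exact ⟨W, W, i, j, hi, hj, hiW, hjW, .refl W, hXW, hYW⟩
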